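/- Let V be a finite set with at least two elements, w : V × V → ℝ≥0 a symmetric weight function with w(v,v) = 0, s ∈ V, and let λ denote the minimum cut value of (V,w). Let v ∈ V∖{s} be a vertex such that some subset S with v ∈ S ⊆ V∖{s} satisfies cut(S) = λ. Then among all subsets S with v ∈ S ⊆ V∖{s} and cut(S) = λ, there is a unique one of minimum cardinality. -/

import Mathlib

/-!
The cut function is submodular: `cut(S ∩ T) + cut(S ∪ T) ≤ cut(S) + cut(T)`. If `S` and `T` both
contain `v`, avoid `s` and have minimum cut value, then `S ∩ T` and `S ∪ T` also contain `v`
and avoid `s`; both are nonempty and proper, so their cut values are at least `lam`, and submodularity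
forces `cut(S ∩ T) = lam`. When `S` and `T` have minimum cardinality, `S ∩ T` cannot be smaller than
either of them, hence `S = S ∩ T = T`.
-/

open Finset

/-- The cut value of a set `S`: total weight of edges with exactly one endpoint in `S`. -/
noncomputable def cutVal {V : Type*} [Fintype V] [DecidableEq V]
    (w : V → V → NNReal) (S : Finset V) : NNReal :=
  ∑ u ∈ S, ∑ v ∈ Sᶜ, w u v

lemma cutVal_eq_sum_ite {V : Type*} [Fintype V] [DecidableEq V]
    (w : V → V → NNReal) (S : Finset V) :
    cutVal w S = ∑ u, ∑ v, if u ∈ S ∧ v ∉ S then w u v else 0 := by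
  simp only [cutVal, ← mem_compl, ite_and]
  rw [← Finset.sum_subset (subset_univ S) (by simp +contextual)]
  refine Finset.sum_congr rfl fun u hu => ?_
  simp only [hu, if_true]
  rw [Finset.sum_ite_mem, univ_inter]

/-- Submodularity of the cut function. It holds separately for the contribution of each
ordered pair of vertices. -/
lemma cutVal_inter_add_cutVal_union_le {V : Type*} [Fintype V] [DecidableEq V]
    (w : V → V → NNReal) (S T : Finset V) :
    cutVal w (S ∩ T) + cutVal w (S ∪ T) ≤ cutVal w S + cutVal w T := by
  simp only [cutVal_eq_sum_ite, ← Finset.sum_add_distrib]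
  refine Finset.sum_le_sum fun a _ => Finset.sum_le_sum fun b _ => ?_
  by_cases h1 : a ∈ S <;> by_cases h2 : a ∈ T <;> by_cases h3 : b ∈ S <;>
    by_cases h4 : b ∈ T <;> simp [h1, h2, h3, h4]

/-- Among all sets `S` with `v ∈ S ⊆ V \ {s}` achieving the minimum cut value `lam`,
there is a unique one of minimum cardinality. -/
theorem stmt3 {V : Type*} [Fintype V] [DecidableEq V]
    (hV : 2 ≤ Fintype.card V)
    (w : V → V → NNReal) (hsymm : ∀ u v, w u v = w v u) (hdiag : ∀ v, w v v = 0)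
    (s : V) (lam : NNReal)
    (hlam : ∀ T : Finset V, T.Nonempty → T ≠ Finset.univ → lam ≤ cutVal w T)
    (v : V) (hv : v ≠ s)
    (hex : ∃ S : Finset V, v ∈ S ∧ s ∉ S ∧ cutVal w S = lam) :
    ∃! S : Finset V, (v ∈ S ∧ s ∉ S ∧ cutVal w S = lam) ∧
      ∀ T : Finset V, v ∈ T → s ∉ T → cutVal w T = lam → S.card ≤ T.card := by
  obtain ⟨S₀, hS₀⟩ := hex
  obtain ⟨S, hS, hmin⟩ := Finset.exists_min_image
    (univ.filter fun S : Finset V => v ∈ S ∧ s ∉ S ∧ cutVal w S = lam) Finset.card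
    ⟨S₀, by simpa using hS₀⟩
  simp only [mem_filter, mem_univ, true_and] at hS hmin
  refine ⟨S, ⟨hS, fun T h1 h2 h3 => hmin T ⟨h1, h2, h3⟩⟩, ?_⟩
  rintro T ⟨⟨hvT, hsT, hT⟩, hTmin⟩
  obtain ⟨hvS, hsS, hScut⟩ := hS
  have hvI : v ∈ S ∩ T := mem_inter.2 ⟨hvS, hvT⟩
  have hsI : s ∉ S ∩ T := fun h => hsS (mem_inter.1 h).1
  have hsU : s ∉ S ∪ T := by simp [hsS, hsT]
  have hI := hlam (S ∩ T) ⟨v, hvI⟩ (fun h => hsI (h ▸ mem_univ s))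
  have hU := hlam (S ∪ T) ⟨v, mem_union_left T hvS⟩ (fun h => hsU (h ▸ mem_univ s))
  have hsub := cutVal_inter_add_cutVal_union_le w S T
  rw [hScut, hT] at hsub
  have hIcut : cutVal w (S ∩ T) = lam :=
    le_antisymm (le_of_add_le_add_right ((add_le_add_right hU _).trans hsub)) hI
  have hIS : S ∩ T = S :=
    eq_of_subset_of_card_le inter_subset_left (hmin _ ⟨hvI, hsI, hIcut⟩)
  have hIT : S ∩ T = T :=
    eq_of_subset_of_card_le inter_subset_right (hTmin _ hvI hsI hIcut)
  exact hIT.symm.trans hIS
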